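/- Let x be an edge-to-edge rhombus tiling of ℝ² with finitely many shapes up to translation, and let u be an edge direction such that the shape-uniform recurrence holds for some rhombus with edge direction u (so that every disk of a fixed radius R in x meets a chain of normal vector u). Then the chains of normal vector u in x can be indexed by ℤ in such a way that, starting from any point of the plane and moving along the direction u, one crosses the u-chains in increasing order of index, and one crosses arbitrarily many u-chains in both the u and −u directions. -/

import Mathlib

open Set Metric

noncomputable section

/-- Points of the euclidean plane. -/
abbrev Pt : Type := EuclideanSpace ℝ (Fin 2)

/-- A rhombus tile in the plane, given by a position (a distinguished vertex)
and its two edge vectors. -/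
structure Rhombus where
  pos : Pt
  u : Pt
  v : Pt

namespace Rhombus

/-- A genuine rhombus: linearly independent edge vectors of equal euclidean length. -/
def IsValid (r : Rhombus) : Prop :=
  LinearIndependent ℝ ![r.u, r.v] ∧ ‖r.u‖ = ‖r.v‖

/-- The support of a rhombus: the closed parallelogram it spans. -/
def support (r : Rhombus) : Set Pt :=
  {x | ∃ s t : ℝ, s ∈ Icc (0 : ℝ) 1 ∧ t ∈ Icc (0 : ℝ) 1 ∧ x = r.pos + s • r.u + t • r.v}

/-- The four vertices of a rhombus. -/
def vertices (r : Rhombus) : Set Pt :=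
  {r.pos, r.pos + r.u, r.pos + r.v, r.pos + r.u + r.v}

/-- The four (closed) edges of a rhombus, indexed as in the paper:
edge `0` from `pos` to `pos + u`, edge `1` from `pos + u` to `pos + u + v`,
edge `2` from `pos + u + v` to `pos + v`, edge `3` from `pos + v` to `pos`. -/
def edge (r : Rhombus) : Fin 4 → Set Pt :=
  ![segment ℝ r.pos (r.pos + r.u),
    segment ℝ (r.pos + r.u) (r.pos + r.u + r.v),
    segment ℝ (r.pos + r.u + r.v) (r.pos + r.v),
    segment ℝ (r.pos + r.v) r.pos]

/-- The set of edges of a rhombus. -/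
def edges (r : Rhombus) : Set (Set Pt) := Set.range r.edge

/-- Translation of a rhombus by a vector. -/
def translate (r : Rhombus) (w : Pt) : Rhombus := ⟨r.pos + w, r.u, r.v⟩

/-- The center of a rhombus. -/
def center (r : Rhombus) : Pt := r.pos + (2⁻¹ : ℝ) • r.u + (2⁻¹ : ℝ) • r.v

/-- Two rhombi are translates of each other (same shape up to translation). -/
def SameShape (r s : Rhombus) : Prop := r.u = s.u ∧ r.v = s.v

/-- `w` is one of the two edge directions of `r` (up to sign). -/
def HasEdgeDir (r : Rhombus) (w : Pt) : Prop :=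
  r.u = w ∨ r.u = -w ∨ r.v = w ∨ r.v = -w

end Rhombus

/-- Two rhombi are in edge-to-edge position: they are disjoint, share exactly one
common vertex, or share exactly one full common edge. -/
def EdgeToEdgePair (r s : Rhombus) : Prop :=
  r.support ∩ s.support = ∅ ∨
  (∃ p, p ∈ r.vertices ∧ p ∈ s.vertices ∧ r.support ∩ s.support = {p}) ∨
  (∃ e, e ∈ r.edges ∧ e ∈ s.edges ∧ r.support ∩ s.support = e)

/-- An edge-to-edge rhombus tiling of the plane: a covering of the plane
without overlap where any two tiles are disjoint, share exactly one vertex or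
share a full common edge. -/
def IsTiling (x : Set Rhombus) : Prop :=
  (∀ r ∈ x, r.IsValid) ∧
  (⋃ r ∈ x, r.support) = univ ∧
  ∀ r ∈ x, ∀ s ∈ x, r ≠ s → EdgeToEdgePair r s

/-- Every tile of `x` is a translate of a shape of the shapeset `T`. -/
def UsesShapes (T : Set Rhombus) (x : Set Rhombus) : Prop :=
  ∀ r ∈ x, ∃ s ∈ T, r.SameShape s

/-- An edge-to-edge tiling whose tiles are translates of shapes of `T`. -/
def IsTilingOn (T : Set Rhombus) (x : Set Rhombus) : Prop :=
  IsTiling x ∧ UsesShapes T x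

/-- Support of a patch. -/
def PatchSupport (P : Set Rhombus) : Set Pt := ⋃ r ∈ P, r.support

/-- A patch: a finite nonempty edge-to-edge set of rhombi whose support is
simply connected (no holes). -/
def IsPatch (P : Set Rhombus) : Prop :=
  P.Finite ∧ P.Nonempty ∧ (∀ r ∈ P, r.IsValid) ∧
  (∀ r ∈ P, ∀ s ∈ P, r ≠ s → EdgeToEdgePair r s) ∧
  SimplyConnectedSpace (PatchSupport P)

/-- Translation of a set of rhombi. -/
def translatePatch (P : Set Rhombus) (w : Pt) : Set Rhombus :=
  (fun r => r.translate w) '' P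

/-- The pattern `f` appears in `x`: some translate of `f` is a sub-collection of `x`. -/
def Appears (f : Set Rhombus) (x : Set Rhombus) : Prop :=
  ∃ w : Pt, translatePatch f w ⊆ x

/-- Vertices of a patch. -/
def PatchVertices (P : Set Rhombus) : Set Pt := ⋃ r ∈ P, r.vertices

/-- The support of `P` contains a disk of radius `ρ` centered at a vertex of `P`. -/
def HasRadius (P : Set Rhombus) (ρ : ℝ) : Prop :=
  ∃ c ∈ PatchVertices P, closedBall c ρ ⊆ PatchSupport P

/-- `P` has minimal radius `ρ`: its support contains a disk of radius `ρ` centered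
at one of its vertices, and removing any tile breaks this property. -/
def MinimalRadius (P : Set Rhombus) (ρ : ℝ) : Prop :=
  HasRadius P ρ ∧ ∀ r ∈ P, ¬ HasRadius (P \ {r}) ρ

/-- A rhombus Wang tile: a rhombus with a colour (a natural number) on each edge. -/
structure ColoredRhombus where
  shape : Rhombus
  color : Fin 4 → ℕ

namespace ColoredRhombus

def translate (t : ColoredRhombus) (w : Pt) : ColoredRhombus :=
  ⟨t.shape.translate w, t.color⟩

/-- Two coloured tiles are equal up to translation. -/
def SameTile (t s : ColoredRhombus) : Prop :=
  t.shape.SameShape s.shape ∧ t.color = s.color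

end ColoredRhombus

/-- The colour-erasing operator `π`. -/
def eraseColors (x : Set ColoredRhombus) : Set Rhombus := ColoredRhombus.shape '' x

def translateColoredPatch (P : Set ColoredRhombus) (w : Pt) : Set ColoredRhombus :=
  (fun t => t.translate w) '' P

/-- Any two tiles sharing an edge carry the same colour on the shared edge. -/
def ColorMatching (x : Set ColoredRhombus) : Prop :=
  ∀ t ∈ x, ∀ s ∈ x, t.shape ≠ s.shape →
    ∀ i j : Fin 4, t.shape.edge i = s.shape.edge j → t.color i = s.color j

/-- No two distinct coloured tiles occupy the same rhombus. -/
def ShapeInjective (x : Set ColoredRhombus) : Prop :=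
  ∀ t ∈ x, ∀ s ∈ x, t.shape = s.shape → t = s

/-- A valid tiling by rhombus Wang tiles. -/
def IsColoredTiling (x : Set ColoredRhombus) : Prop :=
  IsTiling (eraseColors x) ∧ ShapeInjective x ∧ ColorMatching x

/-- A valid patch of rhombus Wang tiles. -/
def IsColoredPatch (x : Set ColoredRhombus) : Prop :=
  IsPatch (eraseColors x) ∧ ShapeInjective x ∧ ColorMatching x

/-- All tiles of `x` are translates of tiles of the tileset `T`. -/
def TilesFrom (T : Set ColoredRhombus) (x : Set ColoredRhombus) : Prop :=
  ∀ t ∈ x, ∃ s ∈ T, t.SameTile s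

/-- A subshift on the shapeset `T`: a set of `T`-tilings that is invariant under
translation and closed for the tiling topology (a tiling all of whose finite
patterns appear in tilings of `X` belongs to `X`). -/
def IsSubshift (T : Set Rhombus) (X : Set (Set Rhombus)) : Prop :=
  (∀ x ∈ X, IsTilingOn T x) ∧
  (∀ x ∈ X, ∀ w : Pt, translatePatch x w ∈ X) ∧
  (∀ x, IsTilingOn T x →
    (∀ P, P ⊆ x → P.Finite → P.Nonempty → ∃ y ∈ X, Appears P y) → x ∈ X)

/-- The shape `r` is uniformly recurrent in the tiling `x`: for some `R > 0`,
every disk of radius `R` contains an occurrence (a translate) of `r`. -/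
def UniformlyRecurrentIn (r : Rhombus) (x : Set Rhombus) : Prop :=
  ∃ R : ℝ, 0 < R ∧ ∀ p : Pt, ∃ s ∈ x, s.SameShape r ∧ s.support ⊆ closedBall p R

/-- A shape uniformly recurrent subshift: every shape appearing somewhere in `X`
is uniformly recurrent in every tiling of `X`. -/
def ShapeUniformlyRecurrent (X : Set (Set Rhombus)) : Prop :=
  ∀ r : Rhombus, (∃ y ∈ X, ∃ s ∈ y, s.SameShape r) →
    ∀ x ∈ X, UniformlyRecurrentIn r x

/-- The restriction of `X` to the tilings using only shapes of `T'`. -/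
def restrictShapes (T' : Set Rhombus) (X : Set (Set Rhombus)) : Set (Set Rhombus) :=
  {x ∈ X | UsesShapes T' x}

/-- The subshift on `T` defined by the sequence `F` of forbidden patterns. -/
def SubshiftOfForbidden (T : Set Rhombus) (F : ℕ → Set Rhombus) : Set (Set Rhombus) :=
  {x | IsTilingOn T x ∧ ∀ n : ℕ, ¬ Appears (F n) x}

/-- A chain of rhombuses of normal vector `w` in the tiling `x`: a bi-infinite
sequence of tiles in which any two consecutive tiles share a full common edge of
direction `w`, the chain crossing each of its tiles from one of its two
`w`-edges to the other one. -/
structure Chain (x : Set Rhombus) (w : Pt) where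
  seq : ℤ → Rhombus
  mem : ∀ n : ℤ, seq n ∈ x
  shares : ∀ n : ℤ, ∃ a : Pt,
    segment ℝ a (a + w) ∈ (seq n).edges ∧
    segment ℝ a (a + w) ∈ (seq (n + 1)).edges ∧
    (seq n).support ∩ (seq (n + 1)).support = segment ℝ a (a + w)
  progress : ∀ n : ℤ,
    (seq (n - 1)).support ∩ (seq n).support ≠ (seq n).support ∩ (seq (n + 1)).support

/-- The set of tiles of a chain. -/
def Chain.tiles {x : Set Rhombus} {w : Pt} (c : Chain x w) : Set Rhombus :=
  Set.range c.seq

/-- `C` is the set of tiles of some chain of normal vector `w` in `x`. -/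
def IsChainSet (x : Set Rhombus) (w : Pt) (C : Set Rhombus) : Prop :=
  ∃ c : Chain x w, C = c.tiles

/-- The support of a set of tiles. -/
def ChainSupp (C : Set Rhombus) : Set Pt := ⋃ r ∈ C, r.support


/-- The determinant of two plane vectors, as a linear form of the second one. -/
def detL (p : Pt) : Pt →ₗ[ℝ] ℝ where
  toFun q := p 0 * q 1 - p 1 * q 0
  map_add' q q' := by simp; ring
  map_smul' c q := by simp; ring

theorem detL_apply (p q : Pt) : detL p q = p 0 * q 1 - p 1 * q 0 := rfl

theorem detL_self (p : Pt) : detL p p = 0 := by rw [detL_apply]; ring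

theorem pt_ext {p q : Pt} (h0 : p 0 = q 0) (h1 : p 1 = q 1) : p = q := by
  ext i; fin_cases i <;> assumption

theorem detL_swap (p q : Pt) : detL p q = - detL q p := by
  simp only [detL_apply]; ring

theorem detL_neg_left (p q : Pt) : detL (-p) q = - detL p q := by
  simp only [detL_apply, PiLp.neg_apply]; ring

theorem valid_det {r : Rhombus} (h : r.IsValid) : detL r.u r.v ≠ 0 := by
  intro h0
  have h1 := h.1
  rw [LinearIndependent.pair_iff] at h1
  rw [detL_apply] at h0
  have a := h1 (r.v 0) (-(r.u 0)) (by apply pt_ext <;> simp <;> linarith)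
  have b := h1 (r.v 1) (-(r.u 1)) (by apply pt_ext <;> simp <;> linarith)
  have hv : r.v = 0 := pt_ext (by simpa using a.1) (by simpa using b.1)
  have := h1 0 1 (by simp [hv])
  simp at this

/-- Cramer's rule in the plane. -/
theorem cramer {U V : Pt} (h : detL U V ≠ 0) (p : Pt) :
    p = (detL p V / detL U V) • U + (detL U p / detL U V) • V := by
  simp only [detL_apply] at *
  apply pt_ext <;> simp only [PiLp.add_apply, PiLp.smul_apply, smul_eq_mul] <;>
    rw [div_mul_eq_mul_div, div_mul_eq_mul_div, ← add_div, eq_div_iff h] <;> ring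

theorem coords_unique {U V : Pt} (h : detL U V ≠ 0) {s t s' t' : ℝ}
    (e : s • U + t • V = s' • U + t' • V) : s = s' ∧ t = t' := by
  have e1 := congrArg (detL U) e
  have e2 := congrArg (detL V) e
  simp only [map_add, map_smul, detL_self, smul_eq_mul, mul_zero, add_zero, zero_add] at e1 e2
  rw [detL_swap V U] at e2
  exact ⟨mul_right_cancel₀ (neg_ne_zero.mpr h) e2, mul_right_cancel₀ h e1⟩

theorem coords_unique' {a U V : Pt} (h : detL U V ≠ 0) {s t s' t' : ℝ}
    (e : a + s • U + t • V = a + s' • U + t' • V) : s = s' ∧ t = t' := by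
  rw [add_assoc, add_assoc] at e
  exact coords_unique h (add_left_cancel e)

/-- Geometric equality of two rhombi (same tile, possibly with another parametrization). -/
structure GeoEq (r r' : Rhombus) : Prop where
  supp : r.support = r'.support
  edges : r.edges = r'.edges
  verts : r.vertices = r'.vertices
  det : |detL r.u r.v| = |detL r'.u r'.v|
  vecs : ({r.u, -r.u, r.v, -r.v} : Set Pt) = {r'.u, -r'.u, r'.v, -r'.v}

theorem GeoEq.refl (r : Rhombus) : GeoEq r r := ⟨rfl, rfl, rfl, rfl, rfl⟩

theorem GeoEq.trans {a b c : Rhombus} (h : GeoEq a b) (k : GeoEq b c) : GeoEq a c :=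
  ⟨h.1.trans k.1, h.2.trans k.2, h.3.trans k.3, h.4.trans k.4, h.5.trans k.5⟩

theorem edges_eq (r : Rhombus) : r.edges = {segment ℝ r.pos (r.pos + r.u),
    segment ℝ (r.pos + r.u) (r.pos + r.u + r.v),
    segment ℝ (r.pos + r.u + r.v) (r.pos + r.v),
    segment ℝ (r.pos + r.v) r.pos} := by
  ext e
  simp only [Rhombus.edges, Set.mem_range, Fin.exists_fin_succ, Rhombus.edge]
  simp [eq_comm]

theorem GeoEq.swap (a U V : Pt) : GeoEq ⟨a, U, V⟩ ⟨a, V, U⟩ := by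
  refine ⟨?_, ?_, ?_, ?_, ?_⟩
  · ext p
    constructor
    · rintro ⟨s, t, hs, ht, rfl⟩
      exact ⟨t, s, ht, hs, by simp only; abel⟩
    · rintro ⟨s, t, hs, ht, rfl⟩
      exact ⟨t, s, ht, hs, by simp only; abel⟩
  · rw [edges_eq, edges_eq]
    simp only
    rw [segment_symm ℝ (a + V) a, segment_symm ℝ (a + U + V) (a + V),
      segment_symm ℝ (a + U) a, segment_symm ℝ (a + V + U) (a + U), add_right_comm a V U]
    ext e; simp only [mem_insert_iff, mem_singleton_iff]; tauto
  · simp only [Rhombus.vertices]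
    rw [add_right_comm a V U]
    ext e; simp only [mem_insert_iff, mem_singleton_iff]; tauto
  · simp only; rw [detL_swap, abs_neg]
  · ext e; simp only [mem_insert_iff, mem_singleton_iff]; tauto

theorem GeoEq.flip (a U V : Pt) : GeoEq ⟨a, U, V⟩ ⟨a + U, -U, V⟩ := by
  refine ⟨?_, ?_, ?_, ?_, ?_⟩
  · ext p
    constructor
    · rintro ⟨s, t, hs, ht, rfl⟩
      exact ⟨1 - s, t, ⟨by linarith [hs.2], by linarith [hs.1]⟩, ht, by simp only; module⟩
    · rintro ⟨s, t, hs, ht, rfl⟩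
      exact ⟨1 - s, t, ⟨by linarith [hs.2], by linarith [hs.1]⟩, ht, by simp only; module⟩
  · rw [edges_eq, edges_eq]
    simp only [add_neg_cancel_right]
    rw [segment_symm ℝ (a + U) a, segment_symm ℝ (a + V) a,
      segment_symm ℝ (a + U + V) (a + U), segment_symm ℝ (a + V) (a + U + V)]
    ext e; simp only [mem_insert_iff, mem_singleton_iff]; tauto
  · simp only [Rhombus.vertices, add_neg_cancel_right]
    ext e; simp only [mem_insert_iff, mem_singleton_iff]; tauto
  · simp only; rw [detL_neg_left, abs_neg]
  · ext e; simp only [mem_insert_iff, mem_singleton_iff, neg_neg]; tauto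

theorem GeoEq.flip2 (a U V : Pt) : GeoEq ⟨a, U, V⟩ ⟨a + V, U, -V⟩ :=
  (GeoEq.swap a U V).trans ((GeoEq.flip a V U).trans (GeoEq.swap _ _ _))

theorem GeoEq.det_ne {r : Rhombus} (hr : r.IsValid) {r' : Rhombus} (h : GeoEq r r') :
    detL r'.u r'.v ≠ 0 := by
  have := valid_det hr
  rw [← abs_ne_zero, h.det] at this
  exact abs_ne_zero.mp this

theorem seg_mem {a b p : Pt} : p ∈ segment ℝ a b ↔ ∃ t : ℝ, t ∈ Icc (0 : ℝ) 1 ∧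
    p = a + t • (b - a) := by
  rw [segment_eq_image']
  simp only [Set.mem_image]
  constructor
  · rintro ⟨t, h, e⟩; exact ⟨t, h, e.symm⟩
  · rintro ⟨t, h, e⟩; exact ⟨t, h, e.symm⟩

/-- Points of edges have a coordinate in `{0,1}`; the description edge by edge. -/
theorem edge_coords {r : Rhombus} {e : Set Pt} (he : e ∈ r.edges) {p : Pt} (hp : p ∈ e) :
    ∃ s t : ℝ, p = r.pos + s • r.u + t • r.v ∧ s ∈ Icc (0 : ℝ) 1 ∧ t ∈ Icc (0 : ℝ) 1 ∧
      ((t = 0 ∧ e = segment ℝ r.pos (r.pos + r.u)) ∨ s = 0 ∨ s = 1 ∨ t = 1) := by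
  rw [edges_eq] at he
  simp only [mem_insert_iff, mem_singleton_iff] at he
  rcases he with rfl | rfl | rfl | rfl <;> rw [seg_mem] at hp <;>
    obtain ⟨t, ht, rfl⟩ := hp
  · exact ⟨t, 0, by module, ht, by simp, Or.inl ⟨rfl, rfl⟩⟩
  · exact ⟨1, t, by module, by simp, ht, by simp⟩
  · exact ⟨1 - t, 1, by module, ⟨by linarith [ht.2], by linarith [ht.1]⟩, by simp, by simp⟩
  · exact ⟨0, 1 - t, by module, by simp, ⟨by linarith [ht.2], by linarith [ht.1]⟩, by simp⟩

theorem vert_coords {r : Rhombus} {p : Pt} (hp : p ∈ r.vertices) :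
    ∃ s t : ℝ, p = r.pos + s • r.u + t • r.v ∧ (s = 0 ∨ s = 1) ∧ (t = 0 ∨ t = 1) := by
  rcases hp with rfl | rfl | rfl | hp
  · exact ⟨0, 0, by simp, by simp, by simp⟩
  · exact ⟨1, 0, by simp, by simp, by simp⟩
  · exact ⟨0, 1, by simp, by simp, by simp⟩
  · rw [mem_singleton_iff] at hp
    exact ⟨1, 1, by simp [hp], by simp, by simp⟩

/-- A point interior to a tile belongs to no other tile. -/
theorem interior_unique {x : Set Rhombus} (hx : IsTiling x) {r s r' : Rhombus} (hr : r ∈ x)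
    (hs : s ∈ x) (hg : GeoEq r r') {α β : ℝ} (hα : α ∈ Ioo (0 : ℝ) 1) (hβ : β ∈ Ioo (0 : ℝ) 1)
    (hp : r'.pos + α • r'.u + β • r'.v ∈ s.support) : r = s := by
  by_contra hne
  have hD := hg.det_ne (hx.1 r hr)
  have hpr : r'.pos + α • r'.u + β • r'.v ∈ r.support := by
    rw [hg.supp]
    exact ⟨α, β, Ioo_subset_Icc_self hα, Ioo_subset_Icc_self hβ, rfl⟩
  have hpi := mem_inter hpr hp
  rcases hx.2.2 r hr s hs hne with h | ⟨q, hq, -, h⟩ | ⟨e, he, -, h⟩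
  · rw [h] at hpi; exact hpi
  · rw [h, mem_singleton_iff] at hpi
    rw [hg.verts] at hq
    obtain ⟨s', t', e, hs', ht'⟩ := vert_coords hq
    rw [← hpi] at e
    have := coords_unique' hD e
    rcases hs' with h | h <;> linarith [hα.1, hα.2]
  · rw [h] at hpi
    rw [hg.edges] at he
    obtain ⟨s', t', e, -, -, h'⟩ := edge_coords he hpi
    have := coords_unique' hD e
    rcases h' with ⟨h, -⟩ | h | h | h <;> linarith [hα.1, hα.2, hβ.1, hβ.2]

/-- Two distinct tiles sharing the midpoint of an edge share the edge. -/
theorem share_edge {x : Set Rhombus} (hx : IsTiling x) {r s : Rhombus} {a U V : Pt} (hr : r ∈ x)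
    (hs : s ∈ x) (hne : r ≠ s) (hg : GeoEq r ⟨a, U, V⟩)
    (hp : a + (2⁻¹ : ℝ) • U ∈ s.support) :
    segment ℝ a (a + U) ∈ s.edges ∧ r.support ∩ s.support = segment ℝ a (a + U) := by
  have hD := hg.det_ne (hx.1 r hr)
  simp only at hD
  have e0 : a + (2⁻¹ : ℝ) • U = a + (2⁻¹ : ℝ) • U + (0 : ℝ) • V := by simp
  have hpr : a + (2⁻¹ : ℝ) • U ∈ r.support := by
    rw [hg.supp]
    exact ⟨2⁻¹, 0, by norm_num, by norm_num, by simp⟩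
  have hpi := mem_inter hpr hp
  rcases hx.2.2 r hr s hs hne with h | ⟨q, hq, -, h⟩ | ⟨e, he, hes, h⟩
  · rw [h] at hpi; exact hpi.elim
  · rw [h, mem_singleton_iff] at hpi
    rw [hg.verts] at hq
    obtain ⟨s', t', e, hs', ht'⟩ := vert_coords hq
    rw [← hpi, e0] at e
    have := coords_unique' hD e
    rcases hs' with h | h <;> norm_num [h] at this
  · rw [h] at hpi
    rw [hg.edges] at he
    obtain ⟨s', t', e1, -, -, h'⟩ := edge_coords he hpi
    rw [e0] at e1
    have := coords_unique' hD e1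
    have key : e = segment ℝ a (a + U) := by
      rcases h' with ⟨-, h⟩ | h | h | h
      · exact h
      all_goals norm_num [h] at this
    rw [← key]
    exact ⟨hes, h⟩

/-- Two tiles on the same side of a common edge coincide. -/
theorem same_side {x : Set Rhombus} (hx : IsTiling x) {r s : Rhombus} {a U V V' : Pt} (hr : r ∈ x)
    (hs : s ∈ x) (hg : GeoEq r ⟨a, U, V⟩) (hg' : GeoEq s ⟨a, U, V'⟩)
    (hpos : 0 < detL U V * detL U V') : r = s := by
  have hD' := hg'.det_ne (hx.1 s hs)
  simp only at hD'
  have hc := cramer hD' V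
  set α := detL V V' / detL U V'
  set β := detL U V / detL U V' with hβ
  have hβ0 : 0 < β := by
    rw [hβ]
    have : detL U V / detL U V' = detL U V * detL U V' / (detL U V') ^ 2 := by
      field_simp
    rw [this]; positivity
  obtain ⟨ε, hε, h1, h2⟩ : ∃ ε : ℝ, ε ∈ Ioo (0 : ℝ) 1 ∧ |ε * α| ≤ 1 / 2 ∧ ε * β ≤ 1 := by
    refine ⟨1 / (2 + 2 * |α| + β), ⟨by positivity, ?_⟩, ?_, ?_⟩
    · rw [div_lt_one (by positivity)]; linarith [abs_nonneg α]
    · rw [abs_mul, abs_of_pos (by positivity), one_div_mul_eq_div, div_le_div_iff₀ (by positivity)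
        (by positivity)]; linarith [abs_nonneg α]
    · rw [one_div_mul_eq_div, div_le_one (by positivity)]; linarith [abs_nonneg α]
  refine interior_unique hx hr hs hg (α := 2⁻¹) (β := ε) (by norm_num) hε ?_
  rw [hg'.supp]
  rw [abs_le] at h1
  refine ⟨2⁻¹ + ε * α, ε * β, ⟨by linarith, by linarith⟩, ⟨by nlinarith [hε.1], h2⟩, ?_⟩
  simp only
  conv_lhs => rw [hc]
  module

theorem seg_eq {a b U W : Pt} (hU : U ≠ 0) (h : segment ℝ a (a + U) = segment ℝ b (b + W)) :
    (a = b ∧ U = W) ∨ (a = b + W ∧ U = -W) := by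
  have h1 : a ∈ segment ℝ b (b + W) := h ▸ left_mem_segment ℝ _ _
  have h2 : a + U ∈ segment ℝ b (b + W) := h ▸ right_mem_segment ℝ _ _
  have h3 : b ∈ segment ℝ a (a + U) := h ▸ left_mem_segment ℝ _ _
  have h4 : b + W ∈ segment ℝ a (a + U) := h ▸ right_mem_segment ℝ _ _
  rw [seg_mem] at h1 h2 h3 h4
  simp only [add_sub_cancel_left] at h1 h2 h3 h4
  obtain ⟨s, hs, h1⟩ := h1
  obtain ⟨t, ht, h2⟩ := h2
  obtain ⟨s', hs', h3⟩ := h3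
  obtain ⟨t', ht', h4⟩ := h4
  have e1 : U = (t - s) • W := by
    have : U = (a + U) - a := by abel
    rw [h2, h1] at this; rw [this]; module
  have e2 : W = (t' - s') • U := by
    have : W = (b + W) - b := by abel
    rw [h4, h3] at this; rw [this]; module
  have e3 : ((t - s) * (t' - s') - 1) • U = 0 := by
    rw [sub_smul, mul_smul, ← e2, ← e1]; simp
  have e4 : (t - s) * (t' - s') = 1 := by
    rcases smul_eq_zero.mp e3 with h | h
    · linarith
    · exact absurd h hU
  have e5 : t - s = 1 ∨ t - s = -1 := by
    have l1 : |t - s| ≤ 1 := abs_le.mpr ⟨by linarith [hs.2, ht.1], by linarith [hs.1, ht.2]⟩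
    have l2 : |t' - s'| ≤ 1 := abs_le.mpr ⟨by linarith [hs'.2, ht'.1], by linarith [hs'.1, ht'.2]⟩
    have l3 : |t - s| * |t' - s'| = 1 := by rw [← abs_mul, e4, abs_one]
    have l4 : |t - s| = 1 := by nlinarith [abs_nonneg (t - s), abs_nonneg (t' - s')]
    exact eq_or_eq_neg_of_abs_eq l4
  rcases e5 with h | h
  · left
    have : s = 0 := by linarith [hs.1, ht.2]
    refine ⟨by rw [h1, this]; simp, by rw [e1, h]; simp⟩
  · right
    have : s = 1 := by linarith [hs.2, ht.1]
    refine ⟨by rw [h1, this]; simp, by rw [e1, h]; simp⟩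

/-- A tile having the edge `[a, a+U]` can be parametrized from `a` and `U`. -/
theorem edge_rep {r : Rhombus} {a U : Pt} (hU : U ≠ 0)
    (h : segment ℝ a (a + U) ∈ r.edges) : ∃ V, GeoEq r ⟨a, U, V⟩ := by
  have base : GeoEq r ⟨r.pos, r.u, r.v⟩ := GeoEq.refl r
  -- it is enough to write the edge from one of the parametrizations
  have key : ∀ b W V, GeoEq r ⟨b, W, V⟩ → segment ℝ a (a + U) = segment ℝ b (b + W) →
      ∃ V, GeoEq r ⟨a, U, V⟩ := by
    intro b W V hg e
    rcases seg_eq hU e with ⟨rfl, rfl⟩ | ⟨rfl, rfl⟩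
    · exact ⟨V, hg⟩
    · exact ⟨V, hg.trans (GeoEq.flip _ _ _)⟩
  rw [edges_eq] at h
  simp only [mem_insert_iff, mem_singleton_iff] at h
  rcases h with h | h | h | h
  · exact key _ _ _ base h
  · exact key _ _ _ (base.trans ((GeoEq.flip _ _ _).trans (GeoEq.swap _ _ _))) h
  · rw [segment_symm ℝ (r.pos + r.u + r.v), add_right_comm] at h
    exact key _ _ _ (base.trans (GeoEq.flip2 _ _ _)) h
  · rw [segment_symm ℝ (r.pos + r.v)] at h
    exact key _ _ _ (base.trans (GeoEq.swap _ _ _)) h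


theorem abs_coord_le (p : Pt) (i : Fin 2) : |p i| ≤ ‖p‖ := by
  simpa using PiLp.norm_apply_le p i

theorem abs_detL_le (p q : Pt) : |detL p q| ≤ 2 * ‖p‖ * ‖q‖ := by
  rw [detL_apply]
  have h1 := abs_coord_le p 0
  have h2 := abs_coord_le p 1
  have h3 := abs_coord_le q 0
  have h4 := abs_coord_le q 1
  calc |p 0 * q 1 - p 1 * q 0| ≤ |p 0 * q 1| + |p 1 * q 0| := abs_sub _ _
    _ = |p 0| * |q 1| + |p 1| * |q 0| := by rw [abs_mul, abs_mul]
    _ ≤ ‖p‖ * ‖q‖ + ‖p‖ * ‖q‖ := by gcongr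
    _ = _ := by ring

theorem support_compact (r : Rhombus) : IsCompact r.support := by
  have : r.support = (fun z : ℝ × ℝ => r.pos + z.1 • r.u + z.2 • r.v) ''
      (Icc (0 : ℝ) 1 ×ˢ Icc (0 : ℝ) 1) := by
    ext p
    constructor
    · rintro ⟨s, t, hs, ht, rfl⟩; exact ⟨(s, t), ⟨hs, ht⟩, rfl⟩
    · rintro ⟨⟨s, t⟩, ⟨hs, ht⟩, rfl⟩; exact ⟨s, t, hs, ht, rfl⟩
  rw [this]
  exact (isCompact_Icc.prod isCompact_Icc).image (by fun_prop)

theorem pos_mem_support (r : Rhombus) : r.pos ∈ r.support :=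
  ⟨0, 0, by simp, by simp, by simp⟩

/-- Two tiles of the same shape whose positions are close coincide. -/
theorem same_shape_close {x : Set Rhombus} (hx : IsTiling x) {r s : Rhombus} (hr : r ∈ x)
    (hs : s ∈ x) (h : r.SameShape s) {α β : ℝ} (hα : |α| < 1) (hβ : |β| < 1)
    (e : s.pos = r.pos + α • r.u + β • r.v) : r = s := by
  rw [abs_lt] at hα hβ
  refine interior_unique hx hr hs (GeoEq.refl r) (α := (1 + α) / 2) (β := (1 + β) / 2)
    ⟨by linarith, by linarith⟩ ⟨by linarith, by linarith⟩ ?_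
  refine ⟨(1 - α) / 2, (1 - β) / 2, ⟨by linarith, by linarith⟩, ⟨by linarith, by linarith⟩, ?_⟩
  rw [e, ← h.1, ← h.2]; module

/-- Tiles of a given shape meeting a bounded region are finitely many. -/
theorem finite_shape {x : Set Rhombus} (hx : IsTiling x) (q : Rhombus) (M : ℝ) :
    {s ∈ x | s.SameShape q ∧ ‖s.pos‖ ≤ M}.Finite := by
  by_cases hD : detL q.u q.v = 0
  · convert Set.finite_empty
    ext s
    simp only [mem_ofPred_eq, mem_empty_iff_false, iff_false]
    rintro ⟨hs, h, -⟩
    exact valid_det (hx.1 s hs) (by rw [h.1, h.2]; exact hD)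
  set d := detL q.u q.v with hd
  let F : Rhombus → ℤ × ℤ := fun s => (⌊detL s.pos q.v / d⌋, ⌊detL q.u s.pos / d⌋)
  have hB : ∀ b : ℝ, ∃ N : ℤ, ∀ y : ℝ, |y| ≤ b → ⌊y⌋ ∈ Icc (-N) N := by
    intro b
    refine ⟨⌈b⌉ + 1, fun y hy => ?_⟩
    rw [abs_le] at hy
    constructor
    · rw [Int.le_floor]; push_cast; linarith [Int.le_ceil b]
    · have : (⌊y⌋ : ℝ) ≤ ⌈b⌉ := by linarith [Int.floor_le y, Int.le_ceil b]
      have := Int.cast_le.mp this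
      omega
  obtain ⟨N, hN⟩ := hB (2 * M * ‖q.v‖ / |d|)
  obtain ⟨N', hN'⟩ := hB (2 * ‖q.u‖ * M / |d|)
  apply Set.Finite.of_finite_image (f := F)
  · apply Set.Finite.subset ((Set.finite_Icc (-N) N).prod (Set.finite_Icc (-N') N'))
    rintro _ ⟨s, ⟨hs, h, hM⟩, rfl⟩
    refine ⟨hN _ ?_, hN' _ ?_⟩
    · rw [abs_div]
      have := abs_detL_le s.pos q.v
      gcongr
      exact this.trans (by gcongr)
    · rw [abs_div]
      have := abs_detL_le q.u s.pos
      gcongr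
      exact this.trans (by gcongr)
  · rintro s ⟨hs, h, -⟩ s' ⟨hs', h', -⟩ e
    simp only [F, Prod.mk.injEq] at e
    have e1 := Int.abs_sub_lt_one_of_floor_eq_floor e.1
    have e2 := Int.abs_sub_lt_one_of_floor_eq_floor e.2
    rw [abs_sub_comm] at e1 e2
    refine same_shape_close hx hs hs' ⟨h.1.trans h'.1.symm, h.2.trans h'.2.symm⟩ e1 e2 ?_
    have c1 := cramer hD s.pos
    have c2 := cramer hD s'.pos
    rw [h.1, h.2]
    rw [← hd] at c1 c2
    calc s'.pos = s.pos + (s'.pos - s.pos) := by abel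
      _ = _ := by
        conv_lhs => rw [c2]; arg 2; rw [c1]
        module

/-- Local finiteness. -/
theorem locally_finite {T x : Set Rhombus} (hT : T.Finite) (hx : IsTilingOn T x) (m : Pt) :
    {s ∈ x | (s.support ∩ closedBall m 1).Nonempty}.Finite := by
  have key : {s ∈ x | (s.support ∩ closedBall m 1).Nonempty} ⊆
      ⋃ q ∈ T, {s ∈ x | s.SameShape q ∧ ‖s.pos‖ ≤ ‖m‖ + 1 + ‖q.u‖ + ‖q.v‖} := by
    rintro s ⟨hs, p, ⟨α, β, hα, hβ, hp⟩, hpm⟩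
    obtain ⟨q, hq, hsq⟩ := hx.2 s hs
    simp only [mem_iUnion, mem_ofPred_eq]
    refine ⟨q, hq, hs, hsq, ?_⟩
    rw [mem_closedBall, dist_eq_norm] at hpm
    have e : s.pos = m + (p - m) - α • q.u - β • q.v := by
      rw [hp, hsq.1, hsq.2]; module
    rw [e]
    have i1 := norm_sub_le (m + (p - m) - α • q.u) (β • q.v)
    have i2 := norm_sub_le (m + (p - m)) (α • q.u)
    have i3 := norm_add_le m (p - m)
    rw [norm_smul, Real.norm_eq_abs, abs_of_nonneg hα.1] at i2
    rw [norm_smul, Real.norm_eq_abs, abs_of_nonneg hβ.1] at i1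
    have := mul_le_of_le_one_left (norm_nonneg q.u) hα.2
    have := mul_le_of_le_one_left (norm_nonneg q.v) hβ.2
    linarith
  exact (hT.biUnion fun q _ => finite_shape hx.1 q _).subset key

/-- Existence of the neighbour across an edge. -/
theorem exists_nbr {T x : Set Rhombus} (hT : T.Finite) (hx : IsTilingOn T x) {r : Rhombus}
    (hr : r ∈ x) {a U V : Pt} (hg : GeoEq r ⟨a, U, V⟩) :
    ∃ s ∈ x, r ≠ s ∧ a + (2⁻¹ : ℝ) • U ∈ s.support := by
  have hD := hg.det_ne (hx.1.1 r hr)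
  simp only at hD
  set m := a + (2⁻¹ : ℝ) • U with hm
  set F := {s ∈ x | (s.support ∩ closedBall m 1).Nonempty} \ {r}
  have hF : F.Finite := (locally_finite hT hx m).subset sdiff_subset
  have hcl : IsClosed (⋃ s ∈ F, s.support) :=
    hF.isClosed_biUnion fun s _ => (support_compact s).isClosed
  have hlim : Filter.Tendsto (fun n : ℕ => m - (1 / ((n : ℝ) + 1)) • V) Filter.atTop (nhds m) := by
    have := (tendsto_one_div_add_atTop_nhds_zero_nat (𝕜 := ℝ)).smul_const V
    simpa using this.const_sub m
  have hmem : m ∈ ⋃ s ∈ F, s.support := by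
    refine hcl.mem_of_tendsto hlim ?_
    filter_upwards [hlim.eventually (closedBall_mem_nhds m one_pos)] with n hn
    have hcov : m - (1 / ((n : ℝ) + 1)) • V ∈ ⋃ r ∈ x, r.support := by rw [hx.1.2.1]; trivial
    simp only [mem_iUnion] at hcov ⊢
    obtain ⟨s, hs, hp⟩ := hcov
    refine ⟨s, ⟨⟨hs, _, hp, hn⟩, ?_⟩, hp⟩
    rintro rfl
    rw [hg.supp] at hp
    obtain ⟨α, β, hα, hβ, e⟩ := hp
    have e' : a + (2⁻¹ : ℝ) • U + (-(1 / ((n : ℝ) + 1))) • V = a + α • U + β • V := by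
      rw [← e, hm]; module
    have := (coords_unique' hD e').2
    have h0 : (0 : ℝ) < 1 / ((n : ℝ) + 1) := by positivity
    linarith [hβ.1]
  simp only [mem_iUnion] at hmem
  obtain ⟨s, hs, hp⟩ := hmem
  exact ⟨s, hs.1.1, fun h => hs.2 h.symm, hp⟩

/-- The tile on the other side of an edge. -/
theorem exists_opp {T x : Set Rhombus} (hT : T.Finite) (hx : IsTilingOn T x) {r : Rhombus}
    (hr : r ∈ x) {a U V : Pt} (hU : U ≠ 0) (hg : GeoEq r ⟨a, U, V⟩) :
    ∃ s ∈ x, ∃ V', GeoEq s ⟨a, U, V'⟩ ∧ detL U V * detL U V' < 0 := by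
  obtain ⟨s, hs, hne, hp⟩ := exists_nbr hT hx hr hg
  obtain ⟨he, -⟩ := share_edge hx.1 hr hs hne hg hp
  obtain ⟨V', hV'⟩ := edge_rep hU he
  refine ⟨s, hs, V', hV', ?_⟩
  by_contra hlt
  have h1 := hg.det_ne (hx.1.1 r hr)
  have h2 := hV'.det_ne (hx.1.1 s hs)
  exact hne (same_side hx.1 hr hs hg hV' (lt_of_le_of_ne (not_lt.mp hlt)
    (mul_ne_zero h1 h2).symm))


/-- The lower left corner of a tile (with respect to `u`) is unique. -/
theorem rep_unique_pos {r : Rhombus} {a a' u v v' : Pt} (hu : u ≠ 0) (h : GeoEq r ⟨a, u, v⟩)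
    (h' : GeoEq r ⟨a', u, v'⟩) (hpos : 0 < detL u v * detL u v') : a = a' := by
  have m1 : a ∈ (Rhombus.mk a' u v').support := by
    rw [← h'.supp, h.supp]; exact pos_mem_support _
  have m2 : a' ∈ (Rhombus.mk a u v).support := by
    rw [← h.supp, h'.supp]; exact pos_mem_support _
  obtain ⟨s, t, hs, ht, e⟩ := m1
  obtain ⟨s', t', hs', ht', e'⟩ := m2
  simp only at e e'
  have l1 : detL u a = detL u a' + t * detL u v' := by
    conv_lhs => rw [e]
    simp [detL_self]
  have l2 : detL u a' = detL u a + t' * detL u v := by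
    conv_lhs => rw [e']
    simp [detL_self]
  have hv : detL u v ≠ 0 := fun h0 => by simp [h0] at hpos
  have hv' : detL u v' ≠ 0 := fun h0 => by simp [h0] at hpos
  have l3 : t * (detL u v * detL u v') + t' * (detL u v) ^ 2 = 0 := by
    linear_combination (detL u v) * (-l1 - l2)
  have p2 : 0 < (detL u v) ^ 2 := by positivity
  have t0 : t = 0 := by
    have := mul_nonneg ht'.1 p2.le
    have := mul_nonneg ht.1 hpos.le
    have : t * (detL u v * detL u v') = 0 := by linarith
    exact (mul_eq_zero.mp this).resolve_right hpos.ne'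
  have t0' : t' = 0 := by
    rw [t0] at l3
    have : t' * (detL u v) ^ 2 = 0 := by linarith
    exact (mul_eq_zero.mp this).resolve_right p2.ne'
  rw [t0] at e
  rw [t0'] at e'
  have : (s + s') • u = 0 := by
    have : a = a + s' • u + (0 : ℝ) • v + s • u + (0 : ℝ) • v' := by rw [← e']; exact e
    have h2 : (s + s') • u = (a + s' • u + (0 : ℝ) • v + s • u + (0 : ℝ) • v') - a := by module
    rw [h2, ← this, sub_self]
  have : s + s' = 0 := (smul_eq_zero.mp this).resolve_right hu
  have hs0 : s = 0 := by linarith [hs.1, hs'.1]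
  rw [e, hs0]; simp

/-- Tiles of `x` having `u` as an edge vector. -/
abbrev UTile (x : Set Rhombus) (u : Pt) : Type :=
  {r : Rhombus // r ∈ x ∧ ∃ a v, GeoEq r ⟨a, u, v⟩ ∧ 0 < detL u v}

section UT
variable {x : Set Rhombus} {u : Pt}

/-- Left lower corner. -/
def base (r : UTile x u) : Pt := r.2.2.choose

/-- Crossing vector. -/
def vec (r : UTile x u) : Pt := r.2.2.choose_spec.choose

theorem ut_mem (r : UTile x u) : r.1 ∈ x := r.2.1

theorem ut_geo (r : UTile x u) : GeoEq r.1 ⟨base r, u, vec r⟩ :=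
  r.2.2.choose_spec.choose_spec.1

theorem ut_pos (r : UTile x u) : 0 < detL u (vec r) :=
  r.2.2.choose_spec.choose_spec.2

theorem ut_geo' (r : UTile x u) : GeoEq r.1 ⟨base r + vec r, u, -vec r⟩ :=
  (ut_geo r).trans (GeoEq.flip2 _ _ _)

theorem ut_unique (hu : u ≠ 0) (r : UTile x u) {a v : Pt} (h : GeoEq r.1 ⟨a, u, v⟩)
    (hpos : 0 < detL u v) : base r = a ∧ vec r = v := by
  have e1 : base r = a := rep_unique_pos hu (ut_geo r) h (mul_pos (ut_pos r) hpos)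
  have e2 : base r + vec r = a + v :=
    rep_unique_pos hu (ut_geo' r) (h.trans (GeoEq.flip2 _ _ _))
      (by rw [map_neg, map_neg, neg_mul_neg]; exact mul_pos (ut_pos r) hpos)
  refine ⟨e1, ?_⟩
  rw [e1] at e2
  exact add_left_cancel e2

theorem ut_inj (hx : IsTiling x) {r s : UTile x u} (h : base r = base s) : r = s := by
  apply Subtype.ext
  have := ut_geo s
  rw [← h] at this
  exact same_side hx (ut_mem r) (ut_mem s) (ut_geo r) this (mul_pos (ut_pos r) (ut_pos s))

theorem ut_inj' (hx : IsTiling x) {r s : UTile x u} (h : base r + vec r = base s + vec s) :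
    r = s := by
  apply Subtype.ext
  have := ut_geo' s
  rw [← h] at this
  refine same_side hx (ut_mem r) (ut_mem s) (ut_geo' r) this ?_
  rw [map_neg, map_neg, neg_mul_neg]
  exact mul_pos (ut_pos r) (ut_pos s)

theorem exists_next {T : Set Rhombus} (hT : T.Finite) (hx : IsTilingOn T x) (hu : u ≠ 0)
    (r : UTile x u) : ∃ s : UTile x u, base s = base r + vec r := by
  obtain ⟨s, hs, V', hg, hlt⟩ := exists_opp hT hx (ut_mem r) hu (ut_geo' r)
  have hp : 0 < detL u V' := by
    rw [map_neg] at hlt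
    have := ut_pos r
    by_contra hc
    nlinarith
  exact ⟨⟨s, hs, _, _, hg, hp⟩, (ut_unique hu _ hg hp).1⟩

theorem exists_prev {T : Set Rhombus} (hT : T.Finite) (hx : IsTilingOn T x) (hu : u ≠ 0)
    (r : UTile x u) : ∃ s : UTile x u, base s + vec s = base r := by
  obtain ⟨s, hs, V', hg, hlt⟩ := exists_opp hT hx (ut_mem r) hu (ut_geo r)
  have hp : 0 < detL u (-V') := by
    rw [map_neg]
    have := ut_pos r
    by_contra hc
    nlinarith
  have hg' := hg.trans (GeoEq.flip2 _ _ _)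
  refine ⟨⟨s, hs, _, _, hg', hp⟩, ?_⟩
  obtain ⟨e1, e2⟩ := ut_unique hu ⟨s, hs, _, _, hg', hp⟩ hg' hp
  rw [e1, e2]; abel

/-- The right neighbour permutation. -/
theorem exists_perm {T : Set Rhombus} (hT : T.Finite) (hx : IsTilingOn T x) (hu : u ≠ 0) :
    ∃ N : Equiv.Perm (UTile x u), ∀ r, base (N r) = base r + vec r := by
  choose f hf using exists_next (u := u) hT hx hu
  choose g hg using exists_prev (u := u) hT hx hu
  exact ⟨⟨f, g, fun r => ut_inj' hx.1 (by rw [hg, hf]), fun r => ut_inj hx.1 (by rw [hf, hg])⟩, hf⟩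

/-- A tile with the edge `[a, a+u]` is a `u`-tile, and the edge is its left or right one. -/
theorem ut_of_edge (hx : IsTiling x) (hu : u ≠ 0) {r : Rhombus} (hr : r ∈ x) {a : Pt}
    (h : segment ℝ a (a + u) ∈ r.edges) :
    ∃ s : UTile x u, s.1 = r ∧ (a = base s ∨ a = base s + vec s) := by
  obtain ⟨V, hV⟩ := edge_rep hu h
  have hD := hV.det_ne (hx.1 r hr)
  simp only at hD
  rcases lt_or_gt_of_ne hD with hlt | hgt
  · have hg := hV.trans (GeoEq.flip2 _ _ _)
    have hp : 0 < detL u (-V) := by rw [map_neg]; linarith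
    refine ⟨⟨r, hr, _, _, hg, hp⟩, rfl, Or.inr ?_⟩
    obtain ⟨e1, e2⟩ := ut_unique hu ⟨r, hr, _, _, hg, hp⟩ hg hp
    rw [e1, e2]; abel
  · refine ⟨⟨r, hr, _, _, hV, hgt⟩, rfl, Or.inl ?_⟩
    exact (ut_unique hu ⟨r, hr, _, _, hV, hgt⟩ hV hgt).1.symm

theorem walk_forward {α : Type*} (N : Equiv.Perm α) (t : ℤ → α)
    (hadj : ∀ n, t (n + 1) = N (t n) ∨ t n = N (t (n + 1)))
    (hpr : ∀ n, t (n - 1) ≠ t (n + 1)) (h0 : t 1 = N (t 0)) :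
    ∀ n : ℤ, t n = (N ^ n) (t 0) := by
  have step : ∀ n : ℤ, t (n + 1) = N (t n) := by
    intro n
    induction n using Int.induction_on with
    | zero => simpa using h0
    | succ i ih =>
      rcases hadj (i + 1) with h | h
      · exact h
      · have := hpr (i + 1)
        rw [ih] at h
        rw [add_sub_cancel_right] at this
        exact absurd (N.injective h) this
    | pred i ih =>
      rcases hadj (-i - 1) with h | h
      · exact h
      · have := hpr (-i)
        rw [ih] at this
        rw [sub_add_cancel] at h
        exact absurd h this
  intro n
  induction n using Int.induction_on with
  | zero => simp
  | succ i ih => rw [step, ih, add_comm (i : ℤ) 1, zpow_add, zpow_one, Equiv.Perm.mul_apply]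
  | pred i ih =>
    have h := step (-i - 1)
    rw [sub_add_cancel, ih] at h
    have h2 : t (-i - 1) = N⁻¹ ((N ^ (-i : ℤ)) (t 0)) := by
      rw [h]; simp
    rw [h2, ← Equiv.Perm.mul_apply, ← zpow_neg_one, ← zpow_add]
    congr 2; ring

theorem walk {α : Type*} (N : Equiv.Perm α) (t : ℤ → α)
    (hadj : ∀ n, t (n + 1) = N (t n) ∨ t n = N (t (n + 1)))
    (hpr : ∀ n, t (n - 1) ≠ t (n + 1)) :
    range t = range fun n : ℤ => (N ^ n) (t 0) := by
  rcases hadj 0 with h | h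
  · have := walk_forward N t hadj hpr (by simpa using h)
    exact congrArg range (funext this)
  · have := walk_forward N⁻¹ t (fun n => by
      rcases hadj n with h | h
      · right; rw [h]; simp
      · left; rw [h]; simp) hpr (by rw [zero_add] at h; rw [h]; simp)
    ext y
    constructor
    · rintro ⟨n, rfl⟩
      exact ⟨-n, by simp only; rw [this n, zpow_neg, inv_zpow]⟩
    · rintro ⟨n, rfl⟩
      exact ⟨-n, by simp only; rw [this (-n), zpow_neg, inv_zpow, inv_inv]⟩

/-- The orbit of a tile under the right neighbour permutation. -/
def orb (N : Equiv.Perm (UTile x u)) (r : UTile x u) : Set Rhombus :=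
  range fun n : ℤ => ((N ^ n) r).1

theorem support_not_edge {r : Rhombus} (hr : r.IsValid) : r.support ∉ r.edges := by
  intro he
  have hp : r.pos + (2⁻¹ : ℝ) • r.u + (2⁻¹ : ℝ) • r.v ∈ r.support :=
    ⟨2⁻¹, 2⁻¹, by norm_num, by norm_num, rfl⟩
  obtain ⟨s, t, e, -, -, h⟩ := edge_coords he hp
  have := coords_unique' (valid_det hr) e
  rcases h with ⟨h, -⟩ | h | h | h <;> norm_num [h] at this

theorem chain_orb (hx : IsTiling x) (hu : u ≠ 0) (N : Equiv.Perm (UTile x u))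
    (hN : ∀ r, base (N r) = base r + vec r) (c : Chain x u) : ∃ r, c.tiles = orb N r := by
  have h1 : ∀ n : ℤ, ∃ s : UTile x u, s.1 = c.seq n := by
    intro n
    obtain ⟨a, ha, -, -⟩ := c.shares n
    obtain ⟨s, hs, -⟩ := ut_of_edge hx hu (c.mem n) ha
    exact ⟨s, hs⟩
  choose t ht using h1
  have hadj : ∀ n, t (n + 1) = N (t n) ∨ t n = N (t (n + 1)) := by
    intro n
    obtain ⟨a, ha, ha', hi⟩ := c.shares n
    have hne : t n ≠ t (n + 1) := by
      intro h
      have h' : c.seq n = c.seq (n + 1) := by rw [← ht, ← ht, h]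
      rw [← h', inter_self] at hi
      rw [← hi] at ha
      exact support_not_edge (hx.1 _ (c.mem n)) ha
    obtain ⟨s, hs, hs'⟩ := ut_of_edge hx hu (c.mem n) ha
    obtain ⟨q, hq, hq'⟩ := ut_of_edge hx hu (c.mem (n + 1)) ha'
    obtain rfl : s = t n := Subtype.ext (hs.trans (ht n).symm)
    obtain rfl : q = t (n + 1) := Subtype.ext (hq.trans (ht (n + 1)).symm)
    rcases hs' with e | e <;> rcases hq' with e' | e'
    · exact absurd (ut_inj hx (e.symm.trans e')) hne
    · right; apply ut_inj hx; rw [hN, ← e, ← e']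
    · left; apply ut_inj hx; rw [hN, ← e, ← e']
    · exact absurd (ut_inj' hx (e.symm.trans e')) hne
  have hpr : ∀ n, t (n - 1) ≠ t (n + 1) := by
    intro n h
    apply c.progress n
    rw [← ht (n - 1), ← ht (n + 1), h, inter_comm]
  refine ⟨t 0, ?_⟩
  have hw := walk N t hadj hpr
  have e1 : c.tiles = Subtype.val '' range t := by
    rw [← range_comp, Chain.tiles]
    exact congrArg range (funext fun n => (ht n).symm)
  rw [e1, hw, ← range_comp]; rfl

theorem orb_chain (hx : IsTiling x) (hu : u ≠ 0) (N : Equiv.Perm (UTile x u))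
    (hN : ∀ r, base (N r) = base r + vec r) (r : UTile x u) : IsChainSet x u (orb N r) := by
  have hsucc : ∀ n : ℤ, (N ^ (n + 1)) r = N ((N ^ n) r) := by
    intro n; rw [add_comm, zpow_add, zpow_one, Equiv.Perm.mul_apply]
  have hv0 : ∀ q : UTile x u, vec q ≠ 0 := by
    intro q h
    have := ut_pos q
    simp [h] at this
  have key : ∀ q : UTile x u, segment ℝ (base q + vec q) (base q + vec q + u) ∈ q.1.edges ∧
      segment ℝ (base q + vec q) (base q + vec q + u) ∈ (N q).1.edges ∧
      q.1.support ∩ (N q).1.support = segment ℝ (base q + vec q) (base q + vec q + u) := by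
    intro q
    have hne : q.1 ≠ (N q).1 := by
      intro h
      have h2 := hN q
      rw [← Subtype.ext h] at h2
      exact hv0 q (by simpa using h2)
    refine ⟨?_, share_edge hx (ut_mem q) (ut_mem _) hne (ut_geo' q) ?_⟩
    · rw [(ut_geo' q).edges, edges_eq]; simp
    · rw [← hN, (ut_geo (N q)).supp]
      exact ⟨2⁻¹, 0, by norm_num, by norm_num, by simp⟩
  refine ⟨⟨fun n => ((N ^ n) r).1, fun n => ut_mem _, fun n => ?_, fun n => ?_⟩, rfl⟩
  · simp only [hsucc]
    exact ⟨_, key _⟩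
  · have e : (N ^ n) r = N ((N ^ (n - 1)) r) := by rw [← hsucc, sub_add_cancel]
    rw [hsucc, (key ((N ^ n) r)).2.2, e, (key _).2.2, ← hN, ← e]
    intro h
    rcases seg_eq hu h with ⟨h, -⟩ | ⟨-, h⟩
    · exact hv0 ((N ^ n) r) (by simpa using h)
    · have h2 : (2 : ℝ) • u = 0 := by
        rw [two_smul]; nth_rewrite 1 [h]; exact neg_add_cancel u
      exact hu ((smul_eq_zero.mp h2).resolve_left two_ne_zero)

end UT


/-- Coordinate along `u`. -/
def tauL (u : Pt) : Pt →ₗ[ℝ] ℝ where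
  toFun q := (u 0 * q 0 + u 1 * q 1) / (u 0 ^ 2 + u 1 ^ 2)
  map_add' q q' := by simp; ring
  map_smul' c q := by simp; ring

theorem tauL_apply (u q : Pt) :
    tauL u q = (u 0 * q 0 + u 1 * q 1) / (u 0 ^ 2 + u 1 ^ 2) := rfl

theorem usq_pos {u : Pt} (hu : u ≠ 0) : 0 < u 0 ^ 2 + u 1 ^ 2 := by
  by_contra h
  apply hu
  apply pt_ext <;> simp <;> nlinarith [sq_nonneg (u 0), sq_nonneg (u 1)]

theorem tauL_self {u : Pt} (hu : u ≠ 0) : tauL u u = 1 := by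
  rw [tauL_apply, div_eq_one_iff_eq (usq_pos hu).ne']; ring

theorem tau_decomp {u : Pt} (hu : u ≠ 0) {p q : Pt} (h : detL u p = detL u q) :
    p = q + (tauL u p - tauL u q) • u := by
  have hp := usq_pos hu
  rw [← map_sub, tauL_apply]
  rw [detL_apply, detL_apply] at h
  apply pt_ext <;> simp only [PiLp.add_apply, PiLp.smul_apply, PiLp.sub_apply, smul_eq_mul] <;>
    rw [div_mul_eq_mul_div, ← sub_eq_iff_eq_add', eq_div_iff hp.ne']
  · linear_combination (-u 1) * h
  · linear_combination (u 0) * h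

theorem stair_mono {A V : ℤ → Pt} (hA : ∀ n, A (n + 1) = A n + V n) (h : Pt →ₗ[ℝ] ℝ)
    (hV : ∀ n, 0 ≤ h (V n)) {n m : ℤ} {t t' : ℝ} (ht : t ∈ Icc (0 : ℝ) 1)
    (ht' : t' ∈ Icc (0 : ℝ) 1) (hnm : n < m ∨ n = m ∧ t ≤ t') :
    h (A n + t • V n) ≤ h (A m + t' • V m) := by
  have mono : Monotone fun n => h (A n) := by
    apply monotone_int_of_le_succ
    intro n
    simp only [hA, map_add]
    linarith [hV n]
  simp only [map_add, map_smul, smul_eq_mul]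
  rcases hnm with hlt | ⟨rfl, hle⟩
  · have h1 := mono (show n + 1 ≤ m by omega)
    simp only [hA, map_add] at h1
    have := mul_le_of_le_one_left (hV n) ht.2
    have := mul_nonneg ht'.1 (hV m)
    linarith
  · have := mul_le_mul_of_nonneg_right hle (hV n)
    linarith

theorem stair_lip {A V : ℤ → Pt} (hA : ∀ n, A (n + 1) = A n + V n) {L τ : Pt →ₗ[ℝ] ℝ} {K : ℝ}
    (hK : ∀ n, |τ (V n)| ≤ K * L (V n)) (hL : ∀ n, 0 ≤ L (V n))
    (n m : ℤ) {t t' : ℝ} (ht : t ∈ Icc (0 : ℝ) 1) (ht' : t' ∈ Icc (0 : ℝ) 1) :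
    |τ (A n + t • V n) - τ (A m + t' • V m)| ≤ K * |L (A n + t • V n) - L (A m + t' • V m)| := by
  have main : ∀ (n m : ℤ) (t t' : ℝ) (_ : t ∈ Icc (0 : ℝ) 1) (_ : t' ∈ Icc (0 : ℝ) 1),
      (n < m ∨ n = m ∧ t ≤ t') →
      |τ (A n + t • V n) - τ (A m + t' • V m)| ≤
        K * |L (A n + t • V n) - L (A m + t' • V m)| := by
    intro n m t t' ht ht' hnm
    have h0 := stair_mono hA L hL ht ht' hnm
    have h1 := stair_mono hA (K • L + τ) (fun n => by
      have := (abs_le.mp (hK n)).1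
      simp only [LinearMap.add_apply, LinearMap.smul_apply, smul_eq_mul]; linarith) ht ht' hnm
    have h2 := stair_mono hA (K • L - τ) (fun n => by
      have := (abs_le.mp (hK n)).2
      simp only [LinearMap.sub_apply, LinearMap.smul_apply, smul_eq_mul]; linarith) ht ht' hnm
    simp only [LinearMap.add_apply, LinearMap.sub_apply, LinearMap.smul_apply, smul_eq_mul]
      at h1 h2
    rw [abs_of_nonpos (sub_nonpos.mpr h0), abs_le]
    constructor <;> linarith
  rcases lt_trichotomy n m with h | h | h
  · exact main _ _ _ _ ht ht' (Or.inl h)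
  · rcases le_total t t' with h' | h'
    · exact main _ _ _ _ ht ht' (Or.inr ⟨h, h'⟩)
    · rw [abs_sub_comm, abs_sub_comm (L _)]
      exact main _ _ _ _ ht' ht (Or.inr ⟨h.symm, h'⟩)
  · rw [abs_sub_comm, abs_sub_comm (L _)]
    exact main _ _ _ _ ht' ht (Or.inl h)

theorem stair_cover {A V : ℤ → Pt} (hA : ∀ n, A (n + 1) = A n + V n) {L : Pt →ₗ[ℝ] ℝ} {c : ℝ}
    (hc : 0 < c) (hL : ∀ n, c ≤ L (V n)) (y : ℝ) :
    ∃ (n : ℤ) (t : ℝ), t ∈ Icc (0 : ℝ) 1 ∧ L (A n + t • V n) = y := by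
  have mono : Monotone fun n : ℤ => L (A n) - c * n := by
    apply monotone_int_of_le_succ
    intro n
    simp only [hA, map_add]
    push_cast
    linarith [hL n]
  -- largest n with L (A n) ≤ y
  obtain ⟨n, hn, hmax⟩ := Int.exists_greatest_of_bdd (P := fun n => L (A n) ≤ y) (by
      refine ⟨max 0 ⌈(y - L (A 0)) / c⌉, fun z hz => ?_⟩
      by_contra hlt
      rw [not_le, max_lt_iff] at hlt
      have h1 := mono hlt.1.le
      have h2 := (Int.le_ceil ((y - L (A 0)) / c)).trans_lt (Int.cast_lt.mpr hlt.2)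
      rw [div_lt_iff₀ hc] at h2
      simp only [Int.cast_zero] at h1
      linarith) (by
      refine ⟨min 0 ⌊(y - L (A 0)) / c⌋, ?_⟩
      have h1 := mono (min_le_left 0 ⌊(y - L (A 0)) / c⌋)
      have h2 : ((min 0 ⌊(y - L (A 0)) / c⌋ : ℤ) : ℝ) ≤ (y - L (A 0)) / c :=
        (Int.cast_le.mpr (min_le_right _ _)).trans (Int.floor_le _)
      rw [le_div_iff₀ hc] at h2
      simp only [Int.cast_zero] at h1
      linarith)
  have hn1 : y < L (A n) + L (V n) := by
    by_contra h
    have := hmax (n + 1) (by simp only [hA, map_add]; linarith)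
    omega
  have hp : 0 < L (V n) := hc.trans_le (hL n)
  refine ⟨n, (y - L (A n)) / L (V n), ⟨div_nonneg (by linarith) hp.le, ?_⟩, ?_⟩
  · rw [div_le_one hp]; linarith
  · rw [map_add, map_smul, smul_eq_mul, div_mul_cancel₀ _ hp.ne']; ring

theorem stair_fun {A V : ℤ → Pt} (hA : ∀ n, A (n + 1) = A n + V n) {L τ : Pt →ₗ[ℝ] ℝ} {K c : ℝ}
    (hK : ∀ n, |τ (V n)| ≤ K * L (V n)) (hc : 0 < c) (hL : ∀ n, c ≤ L (V n)) :
    ∃ f : ℝ → ℝ, (∀ n t, t ∈ Icc (0 : ℝ) 1 → τ (A n + t • V n) = f (L (A n + t • V n))) ∧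
      ∀ y y', |f y - f y'| ≤ K * |y - y'| := by
  choose n t ht hy using stair_cover hA hc hL
  have hL' : ∀ n, 0 ≤ L (V n) := fun n => hc.le.trans (hL n)
  refine ⟨fun y => τ (A (n y) + t y • V (n y)), ?_, ?_⟩
  · intro m s hs
    have := stair_lip hA hK hL' m (n (L (A m + s • V m))) hs (ht (L (A m + s • V m)))
    rw [hy, sub_self, abs_zero, mul_zero] at this
    exact sub_eq_zero.mp (abs_nonpos_iff.mp this)
  · intro y y'
    have := stair_lip hA hK hL' (n y) (n y') (ht y) (ht y')
    rwa [hy, hy] at this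

/-- Abstract indexing lemma. -/
theorem index_lemma {ι : Type*} (f : ι → ℝ → ℝ) (hcont : ∀ i, Continuous (f i))
    (hsep : ∀ i j, i ≠ j → ∀ y, 1 ≤ |f i y - f j y|)
    (hup : ∀ b, ∃ i, b ≤ f i 0) (hdown : ∀ b, ∃ i, f i 0 ≤ b) :
    ∃ idx : ι → ℤ, Function.Bijective idx ∧ ∀ i j, idx i < idx j → ∀ y, f i y + 1 ≤ f j y := by
  let φ : ι → ℤ := fun i => ⌊f i 0⌋
  have hφ : Function.Injective φ := by
    intro i j h
    by_contra hne
    have := Int.abs_sub_lt_one_of_floor_eq_floor h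
    linarith [hsep i j hne 0]
  let S : Set ℤ := range φ
  let e : ι ≃ S := Equiv.ofInjective φ hφ
  have hSup : ∀ k : ℤ, ∃ s ∈ S, k < s := by
    intro k
    obtain ⟨i, hi⟩ := hup (k + 1)
    refine ⟨φ i, ⟨i, rfl⟩, ?_⟩
    have : k + 1 ≤ φ i := Int.le_floor.mpr (by push_cast; exact hi)
    omega
  have hSdown : ∀ k : ℤ, ∃ s ∈ S, s < k := by
    intro k
    obtain ⟨i, hi⟩ := hdown (k - 1)
    refine ⟨φ i, ⟨i, rfl⟩, ?_⟩
    have : (φ i : ℝ) ≤ ((k - 1 : ℤ) : ℝ) := by push_cast; exact (Int.floor_le _).trans hi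
    have := Int.cast_le.mp this
    omega
  have : NoMaxOrder S := ⟨fun k => by
    obtain ⟨s, hs, h⟩ := hSup k; exact ⟨⟨s, hs⟩, h⟩⟩
  have : NoMinOrder S := ⟨fun k => by
    obtain ⟨s, hs, h⟩ := hSdown k; exact ⟨⟨s, hs⟩, h⟩⟩
  have : Nonempty S := by
    obtain ⟨s, hs, -⟩ := hSup 0; exact ⟨⟨s, hs⟩⟩
  classical
  let _ : LocallyFiniteOrder S := inferInstance
  let _ : SuccOrder S := LinearLocallyFiniteOrder.succOrder S
  let _ : PredOrder S := LinearLocallyFiniteOrder.predOrder S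
  let o : S ≃o ℤ := orderIsoIntOfLinearSuccPredArch
  refine ⟨fun i => o (e i), o.bijective.comp e.bijective, ?_⟩
  intro i j hij y
  have hlt : φ i < φ j := o.lt_iff_lt.mp hij
  have hne : i ≠ j := by rintro rfl; exact lt_irrefl _ hlt
  have h0 : f i 0 < f j 0 := by
    by_contra h
    exact absurd (Int.floor_mono (not_lt.mp h)) (not_le.mpr hlt)
  by_contra hy
  have hlt' : f j y < f i y := by
    have := hsep i j hne y
    rcases le_abs.mp this with h | h <;> linarith
  have hc : Continuous fun z => f i z - f j z := (hcont i).sub (hcont j)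
  obtain ⟨z, hz⟩ := mem_range_of_exists_le_of_exists_ge hc (c := 0)
    ⟨0, by linarith⟩ ⟨y, by linarith⟩
  have := hsep i j hne z
  simp only at hz
  rw [hz] at this
  norm_num at this


theorem vec_bounds {T x : Set Rhombus} (hT : T.Finite) (hx : IsTilingOn T x) (u : Pt) :
    ∃ c K : ℝ, 0 < c ∧ 0 ≤ K ∧ ∀ r : UTile x u, c ≤ detL u (vec r) ∧
      |tauL u (vec r)| ≤ K * detL u (vec r) := by
  set W : Set Pt := ⋃ q ∈ T, {q.u, -q.u, q.v, -q.v} with hWdef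
  have hW : W.Finite := hT.biUnion fun q _ => by simp
  have hmem : ∀ r : UTile x u, vec r ∈ W := by
    intro r
    obtain ⟨q, hq, h⟩ := hx.2 r.1 (ut_mem r)
    have : vec r ∈ ({r.1.u, -r.1.u, r.1.v, -r.1.v} : Set Pt) := by
      rw [(ut_geo r).vecs]; simp
    rw [h.1, h.2] at this
    exact mem_biUnion hq this
  obtain ⟨M, hM⟩ := (hW.image fun w => (detL u w)⁻¹).bddAbove
  obtain ⟨B, hB⟩ := (hW.image fun w => |tauL u w| / detL u w).bddAbove
  refine ⟨(max M 1)⁻¹, max B 0, by positivity, le_max_right _ _, fun r => ⟨?_, ?_⟩⟩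
  · have h1 := hM (mem_image_of_mem _ (hmem r))
    exact inv_le_of_inv_le₀ (ut_pos r) (h1.trans (le_max_left _ _))
  · have h1 := (hB (mem_image_of_mem _ (hmem r))).trans (le_max_left B 0)
    exact (div_le_iff₀ (ut_pos r)).mp h1

theorem dir_rep {s : Rhombus} {u : Pt} (h : s.HasEdgeDir u) : ∃ a V, GeoEq s ⟨a, u, V⟩ := by
  have base : GeoEq s ⟨s.pos, s.u, s.v⟩ := GeoEq.refl s
  rcases h with h | h | h | h
  · rw [h] at base; exact ⟨_, _, base⟩
  · have := base.trans (GeoEq.flip _ _ _)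
    rw [h, neg_neg] at this; exact ⟨_, _, this⟩
  · have := base.trans (GeoEq.swap _ _ _)
    rw [h] at this; exact ⟨_, _, this⟩
  · have := (base.trans (GeoEq.swap _ _ _)).trans (GeoEq.flip _ _ _)
    rw [h, neg_neg] at this; exact ⟨_, _, this⟩

theorem orb_mem {x : Set Rhombus} {u : Pt} (N : Equiv.Perm (UTile x u)) (r : UTile x u) (p : Pt) :
    p ∈ ChainSupp (orb N r) ↔ ∃ n : ℤ, p ∈ ((N ^ n) r).1.support := by
  simp [ChainSupp, orb]

theorem orb_eq_of_mem {x : Set Rhombus} {u : Pt} (N : Equiv.Perm (UTile x u)) {r r' : UTile x u}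
    {n m : ℤ} (h : (N ^ n) r = (N ^ m) r') : orb N r = orb N r' := by
  have h1 : r = (N ^ (m - n)) r' := by
    apply (N ^ n).injective
    rw [h, ← Equiv.Perm.mul_apply, ← zpow_add, add_sub_cancel]
  ext q
  constructor
  · rintro ⟨k, rfl⟩
    refine ⟨k + (m - n), ?_⟩
    show ((N ^ (k + (m - n))) r').1 = ((N ^ k) r).1
    rw [zpow_add, Equiv.Perm.mul_apply, ← h1]
  · rintro ⟨k, rfl⟩
    refine ⟨k - (m - n), ?_⟩
    show ((N ^ (k - (m - n))) r).1 = ((N ^ k) r').1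
    conv_lhs => rw [h1]
    rw [← Equiv.Perm.mul_apply, ← zpow_add, sub_add_cancel]

/-- The lower boundary functions of the chains. -/
theorem exists_strip {T x : Set Rhombus} (hT : T.Finite) (hx : IsTilingOn T x) {u : Pt}
    (hu : u ≠ 0) (N : Equiv.Perm (UTile x u)) (hN : ∀ r, base (N r) = base r + vec r) :
    ∃ K : ℝ, 0 ≤ K ∧ ∃ f : UTile x u → ℝ → ℝ,
      (∀ r y y', |f r y - f r y'| ≤ K * |y - y'|) ∧
      (∀ r p, p ∈ ChainSupp (orb N r) ↔
        f r (detL u p) ≤ tauL u p ∧ tauL u p ≤ f r (detL u p) + 1) ∧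
      (∀ r r', orb N r ≠ orb N r' → ∀ y, 1 ≤ |f r y - f r' y|) := by
  obtain ⟨c, K, hc, hK, hb⟩ := vec_bounds hT hx u
  have hA : ∀ (r : UTile x u) (n : ℤ), base ((N ^ (n + 1)) r) =
      base ((N ^ n) r) + vec ((N ^ n) r) := by
    intro r n
    rw [← hN, add_comm n 1, zpow_add, zpow_one, Equiv.Perm.mul_apply]
  have hf := fun r : UTile x u => stair_fun (A := fun n => base ((N ^ n) r))
    (V := fun n => vec ((N ^ n) r)) (hA r) (L := detL u) (τ := tauL u)
    (fun n => (hb _).2) hc (fun n => (hb _).1)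
  choose f hf1 hf2 using hf
  have hmem : ∀ r p, p ∈ ChainSupp (orb N r) ↔
        f r (detL u p) ≤ tauL u p ∧ tauL u p ≤ f r (detL u p) + 1 := by
    intro r p
    rw [orb_mem]
    constructor
    · rintro ⟨n, hp⟩
      rw [(ut_geo _).supp] at hp
      obtain ⟨s, t, hs, ht, e⟩ := hp
      simp only at e
      have h1 := hf1 r n t ht
      have e1 : detL u p = detL u (base ((N ^ n) r) + t • vec ((N ^ n) r)) := by
        rw [e]; simp [detL_self]
      have e2 : tauL u p = tauL u (base ((N ^ n) r) + t • vec ((N ^ n) r)) + s := by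
        rw [e]; simp only [map_add, map_smul, tauL_self hu, smul_eq_mul]; ring
      rw [e1, ← h1, e2]
      constructor <;> linarith [hs.1, hs.2]
    · intro ⟨h1, h2⟩
      obtain ⟨n, t, ht, e⟩ := stair_cover (A := fun n => base ((N ^ n) r))
        (V := fun n => vec ((N ^ n) r)) (hA r) (L := detL u) hc (fun n => (hb _).1) (detL u p)
      have h3 := hf1 r n t ht
      rw [e] at h3
      refine ⟨n, ?_⟩
      rw [(ut_geo _).supp]
      refine ⟨_, t, ?_, ht, (tau_decomp hu e.symm).trans (by simp only; rw [add_right_comm])⟩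
      rw [h3]
      constructor <;> linarith
  refine ⟨K, hK, f, hf2, hmem, ?_⟩
  intro r r' hne y
  by_contra hlt
  rw [not_le] at hlt
  have hcont : ∀ r, Continuous (f r) := fun r =>
    (LipschitzWith.of_dist_le_mul (K := ⟨K, hK⟩) fun y y' => hf2 r y y').continuous
  have hopen : IsOpen {y | |f r y - f r' y| < 1} :=
    isOpen_lt (((hcont r).sub (hcont r')).abs) continuous_const
  have hcount : (range fun n : ℤ => detL u (base ((N ^ n) r))).Countable := countable_range _
  obtain ⟨z, hz, hzc⟩ := (hcount.dense_compl ℝ).inter_open_nonempty _ hopen ⟨y, hlt⟩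
  obtain ⟨n, t, ht, e⟩ := stair_cover (A := fun n => base ((N ^ n) r))
        (V := fun n => vec ((N ^ n) r)) (hA r) (L := detL u) hc (fun n => (hb _).1) z
  have hfr := hf1 r n t ht
  rw [e] at hfr
  have ht0 : t ≠ 0 := by
    rintro rfl
    exact hzc ⟨n, by rw [← e]; simp⟩
  have ht1 : t ≠ 1 := by
    rintro rfl
    exact hzc ⟨n + 1, by rw [← e]; simp only [hA, one_smul]⟩
  have hz' : |f r z - f r' z| < 1 := hz
  rw [abs_lt] at hz'
  obtain ⟨s, hs, hs1, hs2⟩ : ∃ s : ℝ, s ∈ Ioo (0 : ℝ) 1 ∧ f r' z ≤ f r z + s ∧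
      f r z + s ≤ f r' z + 1 := by
    refine ⟨(f r' z + 1 - f r z) / 2, ⟨by linarith, by linarith⟩, by linarith, by linarith⟩
  set p := base ((N ^ n) r) + s • u + t • vec ((N ^ n) r) with hp
  have ep : detL u p = z := by
    rw [← e, hp]; simp [detL_self]
  have eτ : tauL u p = f r z + s := by
    rw [← hfr, hp]; simp only [map_add, map_smul, tauL_self hu, smul_eq_mul]; ring
  have hp' : p ∈ ChainSupp (orb N r') := by
    rw [hmem, ep, eτ]; exact ⟨hs1, hs2⟩
  rw [orb_mem] at hp'
  obtain ⟨m, hm⟩ := hp'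
  have := interior_unique hx.1 (ut_mem _) (ut_mem _) (ut_geo ((N ^ n) r)) hs
    ⟨lt_of_le_of_ne ht.1 (Ne.symm ht0), lt_of_le_of_ne ht.2 ht1⟩ hm
  exact hne (orb_eq_of_mem N (Subtype.ext this))

/-- In an edge-to-edge rhombus tiling `x` with finitely many
shapes up to translation, if some rhombus with edge direction `u` is uniformly
recurrent in `x`, then the chains of normal vector `u` can be indexed by `ℤ` in
such a way that, starting from any point and moving along the direction `u`, one
crosses the `u`-chains in increasing order, and one crosses arbitrarily many
`u`-chains in both the `u` and `-u` directions (every index is crossed by every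
line of direction `u`). -/
theorem statement_7 (T : Set Rhombus) (hTfin : T.Finite)
    (x : Set Rhombus) (hx : IsTilingOn T x)
    (u : Pt) (r₀ : Rhombus) (hdir : r₀.HasEdgeDir u)
    (hur : UniformlyRecurrentIn r₀ x) :
    ∃ idx : {C : Set Rhombus // IsChainSet x u C} → ℤ,
      Function.Bijective idx ∧
      (∀ (p : Pt) (s t : ℝ) (C₁ C₂ : {C : Set Rhombus // IsChainSet x u C}),
        s < t → p + s • u ∈ ChainSupp C₁.val → p + t • u ∈ ChainSupp C₂.val →
        idx C₁ ≤ idx C₂) ∧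
      (∀ (p : Pt) (n : ℤ), ∃ (t : ℝ) (C : {C : Set Rhombus // IsChainSet x u C}),
        p + t • u ∈ ChainSupp C.val ∧ idx C = n) := by
  obtain ⟨R, hR, hrec⟩ := hur
  have hsdir : ∀ s : Rhombus, s.SameShape r₀ → s.HasEdgeDir u := by
    intro s hs
    unfold Rhombus.HasEdgeDir
    rw [hs.1, hs.2]; exact hdir
  have hu : u ≠ 0 := by
    obtain ⟨s, hs, hss, -⟩ := hrec 0
    obtain ⟨a, V, hg⟩ := dir_rep (hsdir s hss)
    have := hg.det_ne (hx.1.1 s hs)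
    rintro rfl
    simp [detL_apply] at this
  obtain ⟨N, hN⟩ := exists_perm hTfin hx hu
  obtain ⟨K, hK, f, hlip, hmem, hsep⟩ := exists_strip hTfin hx hu N hN
  have hrep : ∀ C : {C : Set Rhombus // IsChainSet x u C}, ∃ r : UTile x u, C.val = orb N r := by
    rintro ⟨C, c, rfl⟩
    exact chain_orb hx.1 hu N hN c
  choose ρ hρ using hrep
  -- every point is near a chain
  obtain ⟨R', hnear⟩ : ∃ R' : ℝ, ∀ p : Pt, ∃ C : {C : Set Rhombus // IsChainSet x u C},
      |tauL u p - f (ρ C) (detL u p)| ≤ R' := by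
    set Lc := LinearMap.toContinuousLinearMap (tauL u)
    refine ⟨‖Lc‖ * R + 1 + K * (2 * ‖u‖ * R), fun p => ?_⟩
    obtain ⟨s, hs, hss, hsub⟩ := hrec p
    obtain ⟨a, V, hg⟩ := dir_rep (hsdir s hss)
    have hedge : segment ℝ a (a + u) ∈ s.edges := by
      rw [hg.edges, edges_eq]; simp
    obtain ⟨q, hq, -⟩ := ut_of_edge hx.1 hu hs hedge
    let C : {C : Set Rhombus // IsChainSet x u C} := ⟨orb N q, orb_chain hx.1 hu N hN q⟩
    refine ⟨C, ?_⟩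
    have hpos : s.pos ∈ ChainSupp (orb N (ρ C)) := by
      rw [← hρ C]
      show s.pos ∈ ChainSupp (orb N q)
      rw [orb_mem]
      refine ⟨0, ?_⟩
      rw [zpow_zero, Equiv.Perm.one_apply, hq]
      exact pos_mem_support s
    rw [hmem] at hpos
    have hd : ‖p - s.pos‖ ≤ R := by
      have := hsub (pos_mem_support s)
      rw [mem_closedBall, dist_eq_norm] at this
      rwa [norm_sub_rev]
    have h1 : |tauL u p - tauL u s.pos| ≤ ‖Lc‖ * R := by
      rw [← map_sub]
      exact (Lc.le_opNorm (p - s.pos)).trans (by gcongr)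
    have h2 : |detL u p - detL u s.pos| ≤ 2 * ‖u‖ * R := by
      rw [← map_sub]
      exact (abs_detL_le _ _).trans (by gcongr)
    have h3 := (hlip (ρ C) (detL u p) (detL u s.pos)).trans (mul_le_mul_of_nonneg_left h2 hK)
    rw [abs_le] at h1 h3 ⊢
    constructor <;> linarith [hpos.1, hpos.2, h1.1, h1.2, h3.1, h3.2]
  have htu : ∀ b : ℝ, tauL u (b • u) = b ∧ detL u (b • u) = 0 := by
    intro b
    simp [tauL_self hu, detL_self]
  obtain ⟨idx, hbij, hidx⟩ := index_lemma (fun C => f (ρ C))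
    (fun C => (LipschitzWith.of_dist_le_mul (K := ⟨K, hK⟩) fun y y' => hlip (ρ C) y y').continuous)
    (fun C C' hne => hsep _ _ (fun h => hne (Subtype.ext (by rw [hρ, hρ, h]))))
    (fun b => by
      obtain ⟨C, hC⟩ := hnear ((b + R') • u)
      rw [(htu _).1, (htu _).2, abs_le] at hC
      exact ⟨C, by linarith [hC.2]⟩)
    (fun b => by
      obtain ⟨C, hC⟩ := hnear ((b - R') • u)
      rw [(htu _).1, (htu _).2, abs_le] at hC
      exact ⟨C, by linarith [hC.1]⟩)
  have hLu : ∀ (p : Pt) (t : ℝ), detL u (p + t • u) = detL u p := by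
    intro p t; simp [detL_self]
  have hτu : ∀ (p : Pt) (t : ℝ), tauL u (p + t • u) = tauL u p + t := by
    intro p t; simp [tauL_self hu]
  refine ⟨idx, hbij, ?_, ?_⟩
  · intro p s t C₁ C₂ hst h1 h2
    rw [hρ, hmem, hLu, hτu] at h1 h2
    by_contra hlt
    have := hidx C₂ C₁ (not_le.mp hlt) (detL u p)
    linarith [h1.1, h2.2]
  · intro p n
    obtain ⟨C, hC⟩ := hbij.2 n
    refine ⟨f (ρ C) (detL u p) - tauL u p, C, ?_, hC⟩
    rw [hρ, hmem, hLu, hτu]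
    constructor <;> linarith
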